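/- Let (Ω,Σ,μ) be a probability space and φ : Ω → Ω a measure-preserving measurable transformation with Perron–Frobenius operator P on L¹(Ω,Σ,μ). Then the following are equivalent: (i) P is exact, i.e., for every f ∈ L¹(Ω,Σ,μ) the sequence Pⁿf converges in L¹-norm to the constant function (∫_Ω f dμ)·1; (ii) for every B ∈ Σ one has lim_{n→∞} sup_{A∈Σ} | μ(φ⁻ⁿ(A) ∩ B) − μ(A)μ(B) | = 0; (iii) for every B ∈ Σ there exists D ∈ Σ with μ(D) > 0 such that lim_{n→∞} sup_{A∈Σ, A⊆D} | μ(φ⁻ⁿ(A) ∩ B) − μ(A)μ(B) | = 0. -/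

import Mathlib

open MeasureTheory Filter Set Topology
open scoped symmDiff ENNReal

/-!
For integrable functions, convergence in `L¹` is the same as convergence of the integrals over
measurable sets, uniformly in the set. Since `Pⁿ 1_B` has integral `μ (φ⁻ⁿ A ∩ B)` over `A`,
condition (ii) says exactly that `Pⁿ 1_B → μ B` in `L¹` for all `B`, and the contractions `Pⁿ`
carry this over from indicators to all of `L¹`.

Conditions (ii) and (iii) are linked by triviality of the tail `σ`-algebra `⋂ n, φ⁻ⁿ Σ`.
If `B = φ⁻ⁿ Cₙ` for all `n`, then testing (iii) on `D ∩ Cₙ` and on `D \ Cₙ` yields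
`μ D * (μ B * (1 - μ B)) = 0`. Conversely, the conditional expectations of `1_B` given `φ⁻ⁿ Σ`
converge in `L²` to a tail measurable function, which is constant when the tail is trivial.
-/

theorem tendstoUniformlyOn_iff_tendsto_iSup_abs_sub {ι α : Type*} {l : Filter ι}
    {F : ι → α → ℝ} {f : α → ℝ} {p : α → Prop}
    (hb : ∀ i, BddAbove (range fun a : {a // p a} => |F i a - f a|)) :
    TendstoUniformlyOn F f l {a | p a} ↔
      Tendsto (fun i => ⨆ a : {a // p a}, |F i a - f a|) l (𝓝 0) := by
  have hnonneg (i : ι) : 0 ≤ ⨆ a : {a // p a}, |F i a - f a| :=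
    Real.iSup_nonneg fun _ => abs_nonneg _
  simp only [Metric.tendstoUniformlyOn_iff, Metric.tendsto_nhds, dist_comm (f _),
    Real.dist_eq, sub_zero, abs_of_nonneg (hnonneg _)]
  refine ⟨fun h ε hε => ?_, fun h ε hε => ?_⟩
  · filter_upwards [h (ε / 2) (half_pos hε)] with i hi
    exact (Real.iSup_le (fun ⟨a, ha⟩ => (hi a ha).le) (half_pos hε).le).trans_lt (half_lt_self hε)
  · filter_upwards [h ε hε] with i hi a ha
    exact (le_ciSup (hb i) ⟨a, ha⟩).trans_lt hi

section Integration

variable {α ι : Type*} [MeasurableSpace α] {μ : Measure α} {l : Filter ι}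

theorem exists_integral_norm_eq_setIntegral_sub_compl {f : α → ℝ} (hf : Integrable f μ) :
    ∃ A, MeasurableSet A ∧ ∫ x, ‖f x‖ ∂μ = ∫ x in A, f x ∂μ - ∫ x in Aᶜ, f x ∂μ := by
  have hnull : NullMeasurableSet {x | 0 ≤ f x} μ :=
    nullMeasurableSet_le aemeasurable_const hf.aemeasurable
  obtain ⟨A, -, hA, hAf⟩ := hnull.exists_measurable_superset_ae_eq
  refine ⟨A, hA, ?_⟩
  rw [integral_norm_eq_pos_sub_neg hf, setIntegral_congr_set hAf,
    setIntegral_congr_set hAf.compl, ← setIntegral_neg_eq_setIntegral_nonpos hf.1]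
  simp only [compl_ofPred, not_le]

theorem exists_eLpNorm_one_le_enorm_setIntegral_add_compl {f : α → ℝ} (hf : Integrable f μ) :
    ∃ A, MeasurableSet A ∧ eLpNorm f 1 μ ≤ ‖∫ x in A, f x ∂μ‖ₑ + ‖∫ x in Aᶜ, f x ∂μ‖ₑ := by
  obtain ⟨A, hA, hnorm⟩ := exists_integral_norm_eq_setIntegral_sub_compl hf
  refine ⟨A, hA, ?_⟩
  calc eLpNorm f 1 μ = ENNReal.ofReal (∫ x in A, f x ∂μ - ∫ x in Aᶜ, f x ∂μ) := by
        rw [eLpNorm_one_eq_lintegral_enorm, ← ofReal_integral_norm_eq_lintegral_enorm hf, hnorm]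
    _ ≤ ‖∫ x in A, f x ∂μ - ∫ x in Aᶜ, f x ∂μ‖ₑ := Real.ofReal_le_enorm _
    _ ≤ ‖∫ x in A, f x ∂μ‖ₑ + ‖∫ x in Aᶜ, f x ∂μ‖ₑ := enorm_sub_le

theorem enorm_setIntegral_le_eLpNorm_one (f : α → ℝ) (A : Set α) :
    ‖∫ x in A, f x ∂μ‖ₑ ≤ eLpNorm f 1 μ :=
  calc ‖∫ x in A, f x ∂μ‖ₑ ≤ ∫⁻ x in A, ‖f x‖ₑ ∂μ := enorm_integral_le_lintegral_enorm _
    _ ≤ ∫⁻ x, ‖f x‖ₑ ∂μ := setLIntegral_le_lintegral _ _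
    _ = eLpNorm f 1 μ := eLpNorm_one_eq_lintegral_enorm.symm

theorem tendsto_eLpNorm_one_sub_iff_tendstoUniformlyOn_setIntegral {f : ι → α → ℝ} {g : α → ℝ}
    (hf : ∀ i, Integrable (f i) μ) (hg : Integrable g μ) :
    Tendsto (fun i => eLpNorm (f i - g) 1 μ) l (𝓝 0) ↔
      TendstoUniformlyOn (fun i A => ∫ x in A, f i x ∂μ) (fun A => ∫ x in A, g x ∂μ) l
        {A | MeasurableSet A} := by
  have hedist (i : ι) (A : Set α) :
      edist (∫ x in A, g x ∂μ) (∫ x in A, f i x ∂μ) = ‖∫ x in A, (f i - g) x ∂μ‖ₑ := by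
    rw [edist_comm, edist_eq_enorm_sub, ← integral_sub (hf i).integrableOn hg.integrableOn]
    rfl
  simp only [EMetric.tendstoUniformlyOn_iff, hedist]
  refine ⟨fun h ε hε => ?_, fun h => ENNReal.tendsto_nhds_zero.2 fun ε hε => ?_⟩
  · filter_upwards [h.eventually_lt_const hε] with i hi A _
    exact (enorm_setIntegral_le_eLpNorm_one _ A).trans_lt hi
  · filter_upwards [h (ε / 2) (ENNReal.half_pos hε.ne')] with i hi
    obtain ⟨A, hA, hnorm⟩ := exists_eLpNorm_one_le_enorm_setIntegral_add_compl ((hf i).sub hg)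
    calc eLpNorm (f i - g) 1 μ ≤ ε / 2 + ε / 2 :=
          hnorm.trans (add_le_add (hi A hA).le (hi Aᶜ hA.compl).le)
      _ = ε := ENNReal.add_halves ε

theorem tendsto_apply_of_tendsto_indicatorConstLp {p : ℝ≥0∞} [Fact (1 ≤ p)] (hp : p ≠ ∞)
    {F : Type*} [NormedAddCommGroup F] [NormedSpace ℝ F]
    {T : ι → Lp ℝ p μ →L[ℝ] F} {L : Lp ℝ p μ →L[ℝ] F} {C : ℝ} (hT : ∀ i, ‖T i‖ ≤ C)
    (h : ∀ (B : Set α) (hB : MeasurableSet B) (hμB : μ B ≠ ∞),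
      Tendsto (fun i => T i (indicatorConstLp p hB hμB 1)) l
        (𝓝 (L (indicatorConstLp p hB hμB 1))))
    (f : Lp ℝ p μ) : Tendsto (fun i => T i f) l (𝓝 (L f)) := by
  induction f using Lp.induction hp with
  | @indicatorConst c B hB hμB =>
    have hsmul : indicatorConstLp p hB hμB.ne c = c • indicatorConstLp p hB hμB.ne (1 : ℝ) := by
      rw [indicatorConstLp, indicatorConstLp, ← MemLp.toLp_const_smul]
      congr 1
      simpa only [Pi.smul_def, smul_eq_mul, mul_one]
        using indicator_const_smul B c fun _ => (1 : ℝ)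
    simpa only [Lp.simpleFunc.coe_indicatorConst, hsmul, map_smul]
      using (h B hB hμB.ne).const_smul c
  | add hf hg _ ihf ihg => simpa only [map_add] using ihf.add ihg
  | isClosed =>
    have hequi : Equicontinuous fun i => (T i : Lp ℝ p μ → F) :=
      ((NormedSpace.equicontinuous_TFAE T).out 5 1 : (∃ C, ∀ i, ‖T i‖ ≤ C) ↔ _).1 ⟨C, hT⟩
    exact hequi.isClosed_setOfPred_tendsto L.continuous

end Integration

section DecreasingSubspaces

theorem tendsto_starProjection_iInf {𝕜 E ι : Type*} [RCLike 𝕜] [NormedAddCommGroup E]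
    [InnerProductSpace 𝕜 E] [CompleteSpace E] [Preorder ι] (V : ι → Submodule 𝕜 E)
    [∀ i, (V i).HasOrthogonalProjection] [(⨅ i, V i).HasOrthogonalProjection]
    (hV : Antitone V) (x : E) :
    Tendsto (fun i => (V i).starProjection x) atTop (𝓝 ((⨅ i, V i).starProjection x)) := by
  have hinf : (⨆ i, (V i)ᗮ).topologicalClosureᗮ = ⨅ i, V i := by
    simp only [Submodule.orthogonal_closure, ← Submodule.iInf_orthogonal,
      Submodule.orthogonal_orthogonal]
  have hlim := (tendsto_const_nhds (x := x)).sub <|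
    Submodule.starProjection_tendsto_closure_iSup (fun i => (V i)ᗮ)
      (fun _ _ hij => Submodule.orthogonal_le (hV hij)) x
  simpa only [← Submodule.starProjection_orthogonal_val, hinf, Submodule.orthogonal_orthogonal]
    using hlim

theorem exists_tendsto_condExpL2_of_antitone {α ι : Type*} {m₀ : MeasurableSpace α}
    {μ : Measure α} [Preorder ι] {ℱ : ι → MeasurableSpace α} (hle : ∀ i, ℱ i ≤ m₀)
    (hanti : Antitone ℱ) (f : Lp ℝ 2 μ) :
    ∃ g : Lp ℝ 2 μ, (∀ i, AEStronglyMeasurable[ℱ i] g μ) ∧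
      Tendsto (fun i => (condExpL2 ℝ ℝ (hle i) f : Lp ℝ 2 μ)) atTop (𝓝 g) := by
  have (i : ι) : Fact (ℱ i ≤ m₀) := ⟨hle i⟩
  let V (i : ι) : Submodule ℝ (Lp ℝ 2 μ) := lpMeas ℝ ℝ (ℱ i) 2 μ
  have hV : Antitone V := fun i j hij f hf =>
    mem_lpMeas_iff_aestronglyMeasurable.2
      ((mem_lpMeas_iff_aestronglyMeasurable.1 hf).mono (hanti hij))
  have hclosed : IsClosed ((⨅ i, V i : Submodule ℝ (Lp ℝ 2 μ)) : Set (Lp ℝ 2 μ)) := by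
    rw [Submodule.coe_iInf]
    exact isClosed_iInter fun i => isClosed_aestronglyMeasurable (hle i)
  have : CompleteSpace (⨅ i, V i : Submodule ℝ (Lp ℝ 2 μ)) := hclosed.completeSpace_coe
  refine ⟨(⨅ i, V i).starProjection f, fun i => ?_, tendsto_starProjection_iInf V hV f⟩
  exact mem_lpMeas_iff_aestronglyMeasurable.1
    ((Submodule.mem_iInf V).1 (Submodule.starProjection_apply_mem _ f) i)

end DecreasingSubspaces

section Mixing

variable {Ω : Type*} [m : MeasurableSpace Ω] {μ : Measure Ω} {φ : Ω → Ω}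

/-- Mixing of `φ` against the fixed set `B`, uniformly over the test sets in the family `𝒜`:
`μ (φ⁻ⁿ A ∩ B) → μ A * μ B` uniformly in `A ∈ 𝒜`. Conditions (ii) and (iii) are the cases where
`𝒜` consists of all measurable sets, respectively of the measurable subsets of `D`. -/
def UniformlyMixingOn (μ : Measure Ω) (φ : Ω → Ω) (𝒜 : Set (Set Ω)) (B : Set Ω) : Prop :=
  TendstoUniformlyOn (fun n A => μ.real (φ^[n] ⁻¹' A ∩ B)) (fun A => μ.real A * μ.real B)
    atTop 𝒜

/-- Membership of `B` in the tail `σ`-algebra `⋂ n, φ⁻ⁿ Σ`, up to a null set for each `n`. -/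
def IsTailEvent (μ : Measure Ω) (φ : Ω → Ω) (B : Set Ω) : Prop :=
  ∀ n : ℕ, ∃ C, MeasurableSet C ∧ B =ᵐ[μ] φ^[n] ⁻¹' C

/-- Exactness of `φ` in the sense of Rokhlin: measurable tail events are null or conull. -/
def HasTrivialTail (μ : Measure Ω) (φ : Ω → Ω) : Prop :=
  ∀ B, MeasurableSet B → IsTailEvent μ φ B → EventuallyConst B (ae μ)

theorem uniformlyMixingOn_iff_tendsto_iSup [IsProbabilityMeasure μ] {p : Set Ω → Prop}
    {B : Set Ω} :
    UniformlyMixingOn μ φ {A | p A} B ↔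
      Tendsto (fun n : ℕ => ⨆ A : {A // p A},
        |(μ (φ^[n] ⁻¹' (A : Set Ω) ∩ B)).toReal - (μ (A : Set Ω)).toReal * (μ B).toReal|)
        atTop (𝓝 0) := by
  refine tendstoUniformlyOn_iff_tendsto_iSup_abs_sub fun n => ⟨1, ?_⟩
  rintro _ ⟨A, rfl⟩
  exact abs_sub_le_of_nonneg_of_le measureReal_nonneg measureReal_le_one
    (mul_nonneg measureReal_nonneg measureReal_nonneg)
    (mul_le_one₀ measureReal_le_one measureReal_nonneg measureReal_le_one)

theorem UniformlyMixingOn.tendsto_sub {𝒜 : Set (Set Ω)} {B : Set Ω}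
    (h : UniformlyMixingOn μ φ 𝒜 B) {A : ℕ → Set Ω} (hA : ∀ n, A n ∈ 𝒜) :
    Tendsto (fun n => μ.real (φ^[n] ⁻¹' A n ∩ B) - μ.real (A n) * μ.real B) atTop (𝓝 0) := by
  rw [Metric.tendsto_nhds]
  intro ε hε
  filter_upwards [Metric.tendstoUniformlyOn_iff.1 h ε hε] with n hn
  rw [dist_zero_right, ← dist_eq_norm, dist_comm]
  exact hn (A n) (hA n)

theorem eventuallyConst_ae_iff_measureReal_eq_zero_or_one [IsProbabilityMeasure μ] {B : Set Ω}
    (hB : MeasurableSet B) : EventuallyConst B (ae μ) ↔ μ.real B = 0 ∨ μ.real B = 1 := by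
  rw [eventuallyConst_set', ae_eq_empty, ae_eq_univ, prob_compl_eq_zero_iff hB,
    measureReal_eq_zero_iff, measureReal_def, ENNReal.toReal_eq_one_iff]

theorem UniformlyMixingOn.eventuallyConst_of_isTailEvent [IsProbabilityMeasure μ]
    (hmp : MeasurePreserving φ μ μ) {B D : Set Ω} (hB : MeasurableSet B) (hD : MeasurableSet D)
    (hDpos : 0 < μ D) (hmix : UniformlyMixingOn μ φ {A | MeasurableSet A ∧ A ⊆ D} B)
    (htail : IsTailEvent μ φ B) : EventuallyConst B (ae μ) := by
  choose C hC hBC using htail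
  have hinter (A : Set Ω) (hA : MeasurableSet A) (n : ℕ) :
      μ.real (φ^[n] ⁻¹' A ∩ B) = μ.real (A ∩ C n) := by
    rw [measureReal_congr ((ae_eq_refl _).inter (hBC n)), ← preimage_inter,
      (hmp.iterate n).measureReal_preimage (hA.inter (hC n)).nullMeasurableSet]
  have hin : Tendsto (fun n => μ.real (D ∩ C n) * (1 - μ.real B)) atTop (𝓝 0) := by
    refine (hmix.tendsto_sub fun n => ⟨hD.inter (hC n), inter_subset_left⟩).congr fun n => ?_
    rw [hinter _ (hD.inter (hC n)), inter_assoc, inter_self]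
    ring
  have hout : Tendsto (fun n => μ.real (D \ C n) * μ.real B) atTop (𝓝 0) := by
    have hneg := (hmix.tendsto_sub fun n => ⟨hD.diff (hC n), sdiff_subset⟩).neg
    rw [neg_zero] at hneg
    refine hneg.congr fun n => ?_
    rw [hinter _ (hD.diff (hC n)), sdiff_inter_self, measureReal_empty, zero_sub, neg_neg]
  have hprod : μ.real D * (μ.real B * (1 - μ.real B)) = 0 := by
    have hsum := (hin.mul_const (μ.real B)).add (hout.mul_const (1 - μ.real B))
    simp only [zero_mul, add_zero] at hsum
    refine tendsto_nhds_unique (tendsto_const_nhds.congr fun n => ?_) hsum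
    rw [← measureReal_inter_add_sdiff (μ := μ) (s := D) (hC n)]
    ring
  have hDne : μ.real D ≠ 0 := (ENNReal.toReal_pos hDpos.ne' (measure_ne_top _ _)).ne'
  refine (eventuallyConst_ae_iff_measureReal_eq_zero_or_one hB).2 ?_
  simpa only [mul_eq_zero, hDne, false_or, sub_eq_zero, eq_comm (a := (1 : ℝ))] using hprod

theorem antitone_comap_iterate (hφ : Measurable φ) : Antitone fun n => m.comap φ^[n] := by
  refine antitone_nat_of_succ_le fun n => ?_
  rw [Function.iterate_succ', ← MeasurableSpace.comap_comp]
  exact MeasurableSpace.comap_mono hφ.comap_le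

theorem HasTrivialTail.ae_eq_const (htriv : HasTrivialTail μ φ) {g : Ω → ℝ} (hg : Measurable g)
    (htail : ∀ n, AEStronglyMeasurable[m.comap φ^[n]] g μ) : ∃ c, g =ᵐ[μ] fun _ => c := by
  refine exists_eventuallyEq_const_of_forall_separating MeasurableSet fun U hU => ?_
  refine eventuallyConst_set.1 (htriv (g ⁻¹' U) (hg hU) fun n => ?_)
  obtain ⟨g', hg', hgg'⟩ := htail n
  obtain ⟨C, hC, hCU⟩ := hg'.measurable hU
  exact ⟨C, hC, hCU ▸ hgg'.preimage U⟩

theorem HasTrivialTail.uniformlyMixingOn [IsProbabilityMeasure μ] (htriv : HasTrivialTail μ φ)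
    (hmp : MeasurePreserving φ μ μ) {B : Set Ω} (hB : MeasurableSet B) :
    UniformlyMixingOn μ φ {A | MeasurableSet A} B := by
  have hle (n : ℕ) : m.comap φ^[n] ≤ m := (hmp.measurable.iterate n).comap_le
  obtain ⟨g, hgtail, hglim⟩ := exists_tendsto_condExpL2_of_antitone hle
    (antitone_comap_iterate hmp.measurable) (indicatorConstLp 2 hB (measure_ne_top μ B) (1 : ℝ))
  set E : ℕ → Lp ℝ 2 μ := fun n =>
    condExpL2 ℝ ℝ (hle n) (indicatorConstLp 2 hB (measure_ne_top μ B) (1 : ℝ))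
  have hlim : TendstoUniformlyOn (fun n A => ∫ x in A, E n x ∂μ) (fun A => ∫ x in A, g x ∂μ)
      atTop {A | MeasurableSet A} := by
    refine (tendsto_eLpNorm_one_sub_iff_tendstoUniformlyOn_setIntegral
      (fun n => (Lp.memLp (E n)).integrable one_le_two) ((Lp.memLp g).integrable one_le_two)).1 ?_
    refine tendsto_of_tendsto_of_tendsto_of_le_of_le tendsto_const_nhds
      ((Lp.tendsto_Lp_iff_tendsto_eLpNorm' _ _).1 hglim) (fun _ => zero_le) fun n => ?_
    exact eLpNorm_le_eLpNorm_of_exponent_le one_le_two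
      ((Lp.aestronglyMeasurable (E n)).sub (Lp.aestronglyMeasurable g))
  have hE (n : ℕ) (A : Set Ω) (hA : MeasurableSet A) :
      ∫ x in φ^[n] ⁻¹' A, E n x ∂μ = μ.real (φ^[n] ⁻¹' A ∩ B) := by
    rw [integral_condExpL2_eq (hle n) _ ⟨A, hA, rfl⟩ (measure_ne_top _ _),
      setIntegral_indicatorConstLp (hmp.measurable.iterate n hA), smul_eq_mul, mul_one, inter_comm]
  obtain ⟨c, hc⟩ := htriv.ae_eq_const (Lp.stronglyMeasurable g).measurable hgtail
  have hg (A : Set Ω) : ∫ x in A, g x ∂μ = μ.real A * c := by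
    rw [integral_congr_ae (ae_restrict_of_ae hc), setIntegral_const, smul_eq_mul]
  have hcB : c = μ.real B := by
    have huniv := hlim.tendsto_at MeasurableSet.univ
    simp only [hg, probReal_univ, one_mul] at huniv
    refine tendsto_nhds_unique huniv (tendsto_const_nhds.congr fun n => ?_)
    simpa using (hE n univ .univ).symm
  rw [UniformlyMixingOn, Metric.tendstoUniformlyOn_iff]
  intro ε hε
  filter_upwards [Metric.tendstoUniformlyOn_iff.1 hlim ε hε] with n hn A hA
  have hnA := hn (φ^[n] ⁻¹' A) (hmp.measurable.iterate n hA)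
  rwa [hE n A hA, hg, hcB, (hmp.iterate n).measureReal_preimage hA.nullMeasurableSet] at hnA

theorem forall_uniformlyMixingOn_iff_exists_pos_measure [IsProbabilityMeasure μ]
    (hmp : MeasurePreserving φ μ μ) :
    (∀ B, MeasurableSet B → UniformlyMixingOn μ φ {A | MeasurableSet A} B) ↔
      ∀ B, MeasurableSet B → ∃ D, MeasurableSet D ∧ 0 < μ D ∧
        UniformlyMixingOn μ φ {A | MeasurableSet A ∧ A ⊆ D} B := by
  refine ⟨fun h B hB => ⟨univ, .univ, by simp, (h B hB).mono fun A hA => hA.1⟩,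
    fun h B hB => ?_⟩
  have htriv : HasTrivialTail μ φ := fun S hS htail =>
    let ⟨_, hD, hDpos, hmix⟩ := h S hS
    hmix.eventuallyConst_of_isTailEvent hmp hS hD hDpos htail
  exact htriv.uniformlyMixingOn hmp hB

end Mixing

section PerronFrobenius

variable {Ω : Type*} [MeasurableSpace Ω] {μ : Measure Ω} {φ : Ω → Ω}
  {P : Lp ℝ 1 μ →L[ℝ] Lp ℝ 1 μ}

/-- `P` is the Perron–Frobenius operator of `φ` on `L¹(μ)`: integrating `P f` over `A` amounts to
integrating `f` over `φ⁻¹ A`. -/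
def IsPerronFrobenius (μ : Measure Ω) (φ : Ω → Ω) (P : Lp ℝ 1 μ →L[ℝ] Lp ℝ 1 μ) : Prop :=
  ∀ (f : Lp ℝ 1 μ) (A : Set Ω), MeasurableSet A →
    ∫ x in A, (P f) x ∂μ = ∫ x in φ ⁻¹' A, f x ∂μ

theorem IsPerronFrobenius.iterate (hP : IsPerronFrobenius μ φ P) (hφ : Measurable φ) (n : ℕ) :
    IsPerronFrobenius μ φ^[n] (P ^ n) := by
  induction n with
  | zero => intro f A _; simp
  | succ n ih =>
    intro f A hA
    rw [pow_succ', mul_apply_eq_comp, hP _ _ hA, ih _ _ (hφ hA),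
      Function.iterate_succ', preimage_comp]

theorem IsPerronFrobenius.norm_le_one (hP : IsPerronFrobenius μ φ P) (hφ : Measurable φ) :
    ‖P‖ ≤ 1 := by
  refine P.opNorm_le_bound zero_le_one fun f => ?_
  rw [one_mul]
  obtain ⟨A, hA, hnorm⟩ := exists_integral_norm_eq_setIntegral_sub_compl (L1.integrable_coeFn (P f))
  calc ‖P f‖ = ∫ x in φ ⁻¹' A, f x ∂μ - ∫ x in (φ ⁻¹' A)ᶜ, f x ∂μ := by
        rw [L1.norm_eq_integral_norm, hnorm, hP f A hA, hP f Aᶜ hA.compl, preimage_compl]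
    _ ≤ ‖∫ x in φ ⁻¹' A, f x ∂μ‖ + ‖∫ x in (φ ⁻¹' A)ᶜ, f x ∂μ‖ :=
        (Real.le_norm_self _).trans (norm_sub_le _ _)
    _ ≤ ∫ x in φ ⁻¹' A, ‖f x‖ ∂μ + ∫ x in (φ ⁻¹' A)ᶜ, ‖f x‖ ∂μ :=
        add_le_add (norm_integral_le_integral_norm _) (norm_integral_le_integral_norm _)
    _ = ‖f‖ := by
        rw [integral_add_compl (hφ hA) (L1.integrable_coeFn f).norm, L1.norm_eq_integral_norm]

/-- The projection `f ↦ (∫ f dμ) · 1` of `L¹(μ)` onto the constants, the limit of `Pⁿ` when `P` is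
exact. -/
noncomputable def meanL1 (μ : Measure Ω) [IsFiniteMeasure μ] : Lp ℝ 1 μ →L[ℝ] Lp ℝ 1 μ :=
  (Lp.constL 1 μ ℝ).comp L1.integralCLM

theorem tendsto_meanL1_iff_tendsto_eLpNorm [IsFiniteMeasure μ] {ι : Type*} {l : Filter ι}
    {u : ι → Lp ℝ 1 μ} {f : Lp ℝ 1 μ} :
    Tendsto u l (𝓝 (meanL1 μ f)) ↔
      Tendsto (fun i => eLpNorm ((u i : Ω → ℝ) - fun _ => ∫ x, f x ∂μ) 1 μ) l (𝓝 0) := by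
  rw [← Lp.tendsto_Lp_iff_tendsto_eLpNorm _ _ (memLp_const _), ← L1.integral_eq_integral,
    L1.integral_eq]
  rfl

theorem IsPerronFrobenius.tendsto_pow_indicator_iff_uniformlyMixingOn [IsFiniteMeasure μ]
    (hP : IsPerronFrobenius μ φ P) (hφ : Measurable φ) {B : Set Ω} (hB : MeasurableSet B) :
    Tendsto (fun n : ℕ => (P ^ n) (indicatorConstLp 1 hB (measure_ne_top μ B) 1)) atTop
        (𝓝 (meanL1 μ (indicatorConstLp 1 hB (measure_ne_top μ B) 1))) ↔
      UniformlyMixingOn μ φ {A | MeasurableSet A} B := by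
  rw [tendsto_meanL1_iff_tendsto_eLpNorm,
    tendsto_eLpNorm_one_sub_iff_tendstoUniformlyOn_setIntegral
      (fun _ => L1.integrable_coeFn _) (integrable_const _)]
  have hiter (n : ℕ) (A : Set Ω) (hA : MeasurableSet A) :
      ∫ x in A, (P ^ n) (indicatorConstLp 1 hB (measure_ne_top μ B) 1) x ∂μ =
        μ.real (φ^[n] ⁻¹' A ∩ B) := by
    rw [hP.iterate hφ n _ A hA, setIntegral_indicatorConstLp (hφ.iterate n hA), smul_eq_mul,
      mul_one, inter_comm]
  have hmean (A : Set Ω) :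
      ∫ _ in A, ∫ x, indicatorConstLp 1 hB (measure_ne_top μ B) (1 : ℝ) x ∂μ ∂μ =
        μ.real A * μ.real B := by
    rw [setIntegral_const, integral_indicatorConstLp, smul_eq_mul, smul_eq_mul, mul_one]
  simp only [hmean, UniformlyMixingOn]
  exact ⟨fun h => h.congr (.of_forall fun n A hA => hiter n A hA),
    fun h => h.congr (.of_forall fun n A hA => (hiter n A hA).symm)⟩

theorem IsPerronFrobenius.forall_tendsto_eLpNorm_iff_forall_uniformlyMixingOn [IsFiniteMeasure μ]
    (hP : IsPerronFrobenius μ φ P) (hφ : Measurable φ) :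
    (∀ f : Lp ℝ 1 μ,
      Tendsto (fun n : ℕ => eLpNorm (((P ^ n) f : Ω → ℝ) - fun _ => ∫ x, f x ∂μ) 1 μ) atTop (𝓝 0)) ↔
      ∀ B, MeasurableSet B → UniformlyMixingOn μ φ {A | MeasurableSet A} B := by
  simp only [← tendsto_meanL1_iff_tendsto_eLpNorm]
  refine ⟨fun h B hB => (hP.tendsto_pow_indicator_iff_uniformlyMixingOn hφ hB).1 (h _),
    fun h => tendsto_apply_of_tendsto_indicatorConstLp ENNReal.one_ne_top
      (fun n => (hP.iterate hφ n).norm_le_one (hφ.iterate n)) fun B hB _ =>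
      (hP.tendsto_pow_indicator_iff_uniformlyMixingOn hφ hB).2 (h B hB)⟩

end PerronFrobenius

theorem stmt5 {Ω : Type*} [m : MeasurableSpace Ω] (μ : Measure Ω) [IsProbabilityMeasure μ]
    (φ : Ω → Ω) (hmp : MeasurePreserving φ μ μ)
    (P : Lp ℝ 1 μ →L[ℝ] Lp ℝ 1 μ)
    (hP : ∀ (f : Lp ℝ 1 μ) (A : Set Ω), MeasurableSet A →
      ∫ x in A, (P f) x ∂μ = ∫ x in φ ⁻¹' A, f x ∂μ) :
    ((∀ f : Lp ℝ 1 μ,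
        Tendsto (fun n : ℕ =>
          eLpNorm (((P ^ n) f : Ω → ℝ) - fun _ => ∫ x, f x ∂μ) 1 μ) atTop (𝓝 0)) ↔
      (∀ B : Set Ω, MeasurableSet B →
        Tendsto (fun n : ℕ => ⨆ A : {A : Set Ω // MeasurableSet A},
          |(μ (φ^[n] ⁻¹' (A : Set Ω) ∩ B)).toReal - (μ (A : Set Ω)).toReal * (μ B).toReal|)
          atTop (𝓝 0)))
    ∧ ((∀ B : Set Ω, MeasurableSet B →
        Tendsto (fun n : ℕ => ⨆ A : {A : Set Ω // MeasurableSet A},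
          |(μ (φ^[n] ⁻¹' (A : Set Ω) ∩ B)).toReal - (μ (A : Set Ω)).toReal * (μ B).toReal|)
          atTop (𝓝 0)) ↔
      (∀ B : Set Ω, MeasurableSet B → ∃ D : Set Ω, MeasurableSet D ∧ 0 < μ D ∧
        Tendsto (fun n : ℕ => ⨆ A : {A : Set Ω // MeasurableSet A ∧ A ⊆ D},
          |(μ (φ^[n] ⁻¹' (A : Set Ω) ∩ B)).toReal - (μ (A : Set Ω)).toReal * (μ B).toReal|)
          atTop (𝓝 0))) := by
  simp only [← uniformlyMixingOn_iff_tendsto_iSup]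
  exact ⟨IsPerronFrobenius.forall_tendsto_eLpNorm_iff_forall_uniformlyMixingOn hP hmp.measurable,
    forall_uniformlyMixingOn_iff_exists_pos_measure hmp⟩
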